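/- arXiv:0806.4012 — 2 statements merged into one kernel-verified Lean document; each statement's English description precedes it below -/
import Mathlib

section
/- Let P be a finite pure simplicial poset of rank k, let σ = (σ_1, …, σ_m) be a composition of k, and let π be any rearrangement of the parts of σ. Then the sum of d^σ(F) over all rank-σ_1 elements F equals the sum of d^π(G) over all rank-π_1 elements G. -/
/-- `rk` is the rank function of a simplicial poset: every principal order
ideal `[⊥, x]` is order-isomorphic to the Boolean lattice of rank `rk x`. -/
def IsSimplicial {P : Type*} [PartialOrder P] [OrderBot P] (rk : P → ℕ) : Prop :=
  ∀ x : P, Nonempty (Set.Icc (⊥ : P) x ≃o Finset (Fin (rk x)))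

/-- The face-to-flag degree `d^σ(F)`: the number of chains
`F = X_1 < X_2 < ⋯ < X_m` with `rk (X_j) = σ_1 + ⋯ + σ_j` for all `j`. -/
noncomputable def flagDeg {P : Type*} [PartialOrder P] (rk : P → ℕ) {m : ℕ} [NeZero m]
    (σ : Fin m → ℕ) (F : P) : ℕ :=
  Nat.card {X : Fin m → P // X 0 = F ∧ StrictMono X ∧
    ∀ j : Fin m, rk (X j) = ∑ i ∈ Finset.Iic j, σ i}

/-!
Count each chain at its last element `T`. The ideal `[⊥, T]` is the Boolean lattice of subsets of a
set of `rk T = σ_1 + ⋯ + σ_m` elements, and a chain of subsets growing by `σ_1, …, σ_m` elements up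
to the whole set is the same thing as an ordered partition of that set into blocks of sizes
`σ_1, …, σ_m` (the blocks are the successive differences). Permuting the order of the blocks of an
ordered partition permutes `σ`.
-/

open Finset

/-- `f` is an ordered partition of `α` whose block of index `i` has `σ i` elements; the partition is
encoded by the function sending each element to the index of its block. -/
def HasFiberCard {α ι : Type*} [Fintype α] [DecidableEq ι] (σ : ι → ℕ) (f : α → ι) : Prop :=
  ∀ i, #{a | f a = i} = σ i

/-- `X` is a flag of type `σ`: a chain whose consecutive ranks, starting from rank `0`, grow by the
parts of `σ`. -/
def IsFlag {P ι : Type*} [Preorder P] [Preorder ι] [LocallyFiniteOrderBot ι] (rk : P → ℕ)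
    (σ : ι → ℕ) (X : ι → P) : Prop :=
  StrictMono X ∧ ∀ j, rk (X j) = ∑ i ∈ Iic j, σ i

theorem card_subtype_eq_sum_card_fiber {A B : Type*} [Finite A] (p : A → Prop) (g : A → B)
    (t : Finset B) (hg : ∀ x, p x → g x ∈ t) :
    Nat.card {x // p x} = ∑ b ∈ t, Nat.card {x // g x = b ∧ p x} := by
  classical
  have := Fintype.ofFinite A
  simp only [Nat.card_eq_fintype_card, Fintype.card_subtype]
  rw [card_eq_sum_card_fiberwise (f := g) (t := t) fun x hx => hg x (by simpa using hx)]
  simp only [filter_filter, and_comm]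

theorem card_Iic_strictMono {ι : Type*} [Preorder ι] [LocallyFiniteOrderBot ι] :
    StrictMono fun j : ι => #(Iic j) :=
  fun _ _ h => card_lt_card (Iic_ssubset_Iic.2 h)

theorem sum_Iic_injective {ι M : Type*} [PartialOrder ι] [LocallyFiniteOrderBot ι]
    [AddCommMonoid M] [IsRightCancelAdd M] :
    Function.Injective fun (u : ι → M) (j : ι) => ∑ i ∈ Iic j, u i := by
  classical
  intro u v h
  have : WellFoundedLT ι := card_Iic_strictMono.wellFoundedLT
  funext j
  induction j using WellFoundedLT.induction with
  | _ j ih =>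
    have hj : ∑ i ∈ Iic j, u i = ∑ i ∈ Iic j, v i := congrFun h j
    rw [← Iio_insert, sum_insert (by simp), sum_insert (by simp),
      sum_congr rfl fun i hi => ih i (mem_Iio.1 hi)] at hj
    exact add_right_cancel hj

section OrderedPartition

variable {α ι : Type*} [Fintype α]

theorem card_hasFiberCard_comp_perm [DecidableEq ι] (σ : ι → ℕ) (e : Equiv.Perm ι) :
    Nat.card {f : α → ι // HasFiberCard (σ ∘ e) f} =
      Nat.card {f : α → ι // HasFiberCard σ f} := by
  refine Nat.card_congr ((Equiv.arrowCongr (Equiv.refl α) e).subtypeEquiv fun f => ?_)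
  simp [HasFiberCard, ← e.forall_congr_right (q := fun i => _ = σ i)]

theorem card_filter_le_eq_sum_card_fiber [Preorder ι] [LocallyFiniteOrderBot ι] [DecidableEq ι]
    [DecidableLE ι] (f : α → ι) (j : ι) :
    #{a | f a ≤ j} = ∑ i ∈ Iic j, #{a | f a = i} := by
  simp [sum_card_fiberwise_eq_card_filter]

theorem filter_le_injective [PartialOrder ι] [DecidableLE ι] :
    Function.Injective fun (f : α → ι) (j : ι) => ({a | f a ≤ j} : Finset α) := by
  intro f g h
  have hle (a : α) (j : ι) : f a ≤ j ↔ g a ≤ j := by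
    simpa using Finset.ext_iff.1 (congrFun h j) a
  exact funext fun a => eq_of_forall_ge_iff (hle a)

section PartialOrder

variable [PartialOrder ι] [LocallyFiniteOrderBot ι] [DecidableEq ι] [DecidableLE ι] {σ : ι → ℕ}

theorem hasFiberCard_iff_card_filter_le {f : α → ι} :
    HasFiberCard σ f ↔ ∀ j, #{a | f a ≤ j} = ∑ i ∈ Iic j, σ i := by
  simp only [card_filter_le_eq_sum_card_fiber]
  exact funext_iff.symm.trans (sum_Iic_injective.eq_iff.symm.trans funext_iff)

theorem HasFiberCard.isFlag {f : α → ι} (hf : HasFiberCard σ f) (hpos : ∀ i, 0 < σ i) :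
    IsFlag card σ fun j => ({a | f a ≤ j} : Finset α) := by
  refine ⟨fun i j hij => ?_, hasFiberCard_iff_card_filter_le.1 hf⟩
  obtain ⟨a, ha⟩ : ({a | f a = j} : Finset α).Nonempty := card_pos.1 (hf j ▸ hpos j)
  have haj : f a = j := by simpa using ha
  have hsub : univ.filter (f · ≤ i) ⊆ univ.filter (f · ≤ j) :=
    monotone_filter_right univ fun _ _ (hb : f _ ≤ i) => hb.trans hij.le
  exact (ssubset_iff_of_subset hsub).2 ⟨a, by simp [haj, hij.not_ge]⟩

end PartialOrder

theorem exists_filter_le_eq [LinearOrder ι] [WellFoundedLT ι] {S : ι → Finset α} (hS : Monotone S)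
    (hcover : ∀ a, ∃ j, a ∈ S j) :
    ∃ f : α → ι, ∀ j, ({a | f a ≤ j} : Finset α) = S j := by
  have hmin (a : α) : ∃ j, a ∈ S j ∧ ∀ i, a ∈ S i → j ≤ i := by
    obtain ⟨j, hj, hjmin⟩ := exists_minimal_of_wellFoundedLT (fun j => a ∈ S j) (hcover a)
    exact ⟨j, hj, fun i hi => (le_total j i).elim id (hjmin hi)⟩
  choose f hmem hle using hmin
  refine ⟨f, fun j => ?_⟩
  ext a
  simpa using ⟨fun h => hS h (hmem a), hle a j⟩

theorem card_isFlag_finset [LinearOrder ι] [LocallyFiniteOrderBot ι] [Fintype ι] [OrderTop ι]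
    {σ : ι → ℕ} (hpos : ∀ i, 0 < σ i) (hcard : Fintype.card α = ∑ i, σ i) :
    Nat.card {S : ι → Finset α // IsFlag card σ S} =
      Nat.card {f : α → ι // HasFiberCard σ f} := by
  symm
  refine Nat.card_congr (Equiv.ofBijective
    (fun f => ⟨fun j => {a | f.1 a ≤ j}, f.2.isFlag hpos⟩) ⟨fun f g h => ?_, ?_⟩)
  · exact Subtype.ext (filter_le_injective (congrArg Subtype.val h))
  · rintro ⟨S, hmono, hrk⟩
    have htop : S ⊤ = univ := by
      rw [← card_eq_iff_eq_univ, hrk, hcard, Iic_top]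
    obtain ⟨f, hf⟩ := exists_filter_le_eq hmono.monotone fun a => ⟨⊤, by simp [htop]⟩
    have hfσ : HasFiberCard σ f := hasFiberCard_iff_card_filter_le.2 fun j => by rw [hf, hrk]
    exact ⟨⟨f, hfσ⟩, Subtype.ext (funext hf)⟩

end OrderedPartition

theorem card_isFlag_congr {P Q ι : Type*} [Preorder P] [Preorder Q] [Preorder ι]
    [LocallyFiniteOrderBot ι] {rkP : P → ℕ} {rkQ : Q → ℕ} {σ : ι → ℕ} (φ : P ≃o Q)
    (hφ : ∀ x, rkQ (φ x) = rkP x) :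
    Nat.card {X : ι → P // IsFlag rkP σ X} = Nat.card {Y : ι → Q // IsFlag rkQ σ Y} := by
  refine Nat.card_congr ((Equiv.arrowCongr (Equiv.refl ι) φ.toEquiv).subtypeEquiv fun X => ?_)
  simp [IsFlag, StrictMono, hφ]

section Simplicial

variable {P : Type*} [PartialOrder P] [OrderBot P] {rk : P → ℕ}

theorem IsSimplicial.ncard_Icc_bot (h : IsSimplicial rk) (x : P) :
    (Set.Icc ⊥ x).ncard = 2 ^ rk x := by
  obtain ⟨φ⟩ := h x
  rw [← Nat.card_coe_set_eq, Nat.card_congr φ.toEquiv, Nat.card_eq_fintype_card,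
    Fintype.card_finset, Fintype.card_fin]

theorem IsSimplicial.card_orderIso_apply (h : IsSimplicial rk) {α : Type*} {T : P}
    (φ : Set.Icc ⊥ T ≃o Finset α) (y : Set.Icc ⊥ T) : #(φ y) = rk y := by
  classical
  have himage : (↑) '' Set.Iic y = Set.Icc ⊥ (y : P) := by
    ext z
    exact ⟨by rintro ⟨w, hw, rfl⟩; exact ⟨bot_le, hw⟩,
      fun hz => ⟨⟨z, bot_le, hz.2.trans y.2.2⟩, hz.2, rfl⟩⟩
  refine Nat.pow_right_injective le_rfl ?_
  calc 2 ^ #(φ y) = (Set.Iic (φ y)).ncard := by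
        rw [← card_Iic_finset, ← coe_Iic, Set.ncard_coe_finset]
    _ = (Set.Iic y).ncard := by
        rw [← φ.image_Iic, Set.ncard_image_of_injective _ φ.injective]
    _ = (Set.Icc ⊥ (y : P)).ncard := by
        rw [← himage, Set.ncard_image_of_injective _ Subtype.val_injective]
    _ = 2 ^ rk y := h.ncard_Icc_bot _

theorem IsSimplicial.strictMono (h : IsSimplicial rk) : StrictMono rk := by
  intro x y hxy
  obtain ⟨φ⟩ := h y
  have hlt : φ ⟨x, bot_le, hxy.le⟩ < φ ⟨y, bot_le, le_rfl⟩ := φ.lt_iff_lt.2 hxy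
  simpa only [h.card_orderIso_apply φ] using card_lt_card hlt

theorem card_isFlag_apply_top_eq {ι : Type*} [PartialOrder ι] [LocallyFiniteOrderBot ι]
    [Fintype ι] [OrderTop ι] {σ : ι → ℕ} (hrk : StrictMono rk) {T : P}
    (hT : rk T = ∑ i, σ i) :
    Nat.card {X : ι → P // X ⊤ = T ∧ IsFlag rk σ X} =
      Nat.card {X : ι → Set.Icc ⊥ T // IsFlag (fun y : Set.Icc ⊥ T => rk y) σ X} := by
  have htop (X : ι → Set.Icc ⊥ T) (hX : IsFlag (fun y : Set.Icc ⊥ T => rk y) σ X) :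
      (X ⊤ : P) = T := by
    have heq : rk (X ⊤) = rk T := (hX.2 ⊤).trans (by rw [Iic_top, hT])
    exact (X ⊤).2.2.eq_of_not_lt fun hlt => (hrk hlt).ne heq
  exact Nat.card_congr
    { toFun X := ⟨fun j => ⟨X.1 j, bot_le, (X.2.2.1.monotone le_top).trans_eq X.2.1⟩, X.2.2⟩
      invFun X := ⟨fun j => X.1 j, htop X.1 X.2, X.2⟩ }

end Simplicial

section FlagDegree

variable {P : Type*} [Fintype P] [PartialOrder P] {m : ℕ} [NeZero m]

theorem sum_flagDeg_eq_card_isFlag (rk : P → ℕ) (σ : Fin m → ℕ) :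
    ∑ F with rk F = σ 0, flagDeg rk σ F = Nat.card {X : Fin m → P // IsFlag rk σ X} := by
  refine (card_subtype_eq_sum_card_fiber _ (fun X : Fin m → P => X 0) _ fun X hX => ?_).symm
  have hIic : Iic (0 : Fin m) = {0} := by ext i; simp
  simp [hX.2 0, hIic]

theorem IsSimplicial.sum_flagDeg_eq_sum_card_hasFiberCard [OrderBot P] {rk : P → ℕ}
    (h : IsSimplicial rk) {σ : Fin m → ℕ} (hpos : ∀ i, 0 < σ i) :
    ∑ F with rk F = σ 0, flagDeg rk σ F =
      ∑ T with rk T = ∑ i, σ i, Nat.card {f : Fin (rk T) → Fin m // HasFiberCard σ f} := by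
  calc
    _ = Nat.card {X : Fin m → P // IsFlag rk σ X} := sum_flagDeg_eq_card_isFlag rk σ
    _ = ∑ T with rk T = ∑ i, σ i, Nat.card {X : Fin m → P // X ⊤ = T ∧ IsFlag rk σ X} :=
      card_subtype_eq_sum_card_fiber _ _ _ fun X hX => by simp [hX.2 ⊤]
    _ = _ := sum_congr rfl fun T hT => ?_
  have hT : rk T = ∑ i, σ i := by simpa using hT
  obtain ⟨φ⟩ := h T
  rw [card_isFlag_apply_top_eq h.strictMono hT,
    card_isFlag_congr φ (h.card_orderIso_apply φ),
    card_isFlag_finset hpos (by rw [Fintype.card_fin, hT])]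

end FlagDegree

theorem sum_flagDeg_perm_invariant_general
    {P : Type*} [Fintype P] [PartialOrder P] [OrderBot P]
    (rk : P → ℕ) (hsimp : IsSimplicial rk)
    {m : ℕ} [NeZero m] (σ : Fin m → ℕ) (hpos : ∀ i, 0 < σ i) (e : Equiv.Perm (Fin m)) :
    ∑ F with rk F = σ 0, flagDeg rk σ F =
      ∑ G with rk G = (σ ∘ e) 0, flagDeg rk (σ ∘ e) G := by
  have hsum : ∑ i, (σ ∘ e) i = ∑ i, σ i := Equiv.sum_comp e σ
  rw [hsimp.sum_flagDeg_eq_sum_card_hasFiberCard hpos,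
    hsimp.sum_flagDeg_eq_sum_card_hasFiberCard (σ := σ ∘ e) fun i => hpos (e i), hsum]
  simp only [card_hasFiberCard_comp_perm]

/-- For a finite pure simplicial poset `P` of rank `k`, a composition `σ` of `k`,
and any rearrangement `π` of the parts of `σ`, the sum of `d^σ(F)` over all
rank-`σ_1` elements `F` equals the sum of `d^π(G)` over all rank-`π_1` elements `G`. -/
theorem sum_flagDeg_perm_invariant
    {P : Type*} [Fintype P] [PartialOrder P] [OrderBot P]
    (rk : P → ℕ) (hsimp : IsSimplicial rk)
    (k : ℕ) (hpure : ∀ x : P, IsMax x → rk x = k)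
    {m : ℕ} [NeZero m] (σ π : Fin m → ℕ)
    (hpos : ∀ i, 0 < σ i) (hsum : ∑ i, σ i = k)
    (e : Equiv.Perm (Fin m)) (hπ : π = σ ∘ e) :
    ∑ F ∈ Finset.univ.filter (fun F : P => rk F = σ 0), flagDeg rk σ F =
      ∑ G ∈ Finset.univ.filter (fun G : P => rk G = π 0), flagDeg rk π G := by
  subst hπ
  exact sum_flagDeg_perm_invariant_general rk hsimp σ hpos e
end

section
/- Let C be a finite graded poset with minimum element ⊥, pure of rank k (every maximal element has rank k), such that for every element x > ⊥ and every maximal element m ≥ x, the interval [x, m] is isomorphic to a Boolean lattice. Let σ = (σ_1, …, σ_m) be a composition of k and let π = (π_1, …, π_m) be a rearrangement of σ with σ_1 < π_1. If F is an element of rank σ_1 and G is an element of rank π_1 with F < G, then d^σ(F) ≥ d^π(G). -/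
/-!
Above a fixed face `F` every interval ending in rank `k` has binomially many elements on each of
its levels.  Choosing the second member of a flag first, and counting pairs of such a member and a
rank `k` element above it in two ways, yields by induction on the number of parts
`d^σ(F) * ∏ σ_i! = N(F) * (k - σ_1)! * σ_1!`,
where `N(F)` is the number of elements of rank `k` above `F`.
Rearranging `σ` does not change `∏ σ_i!`.  Passing from `F` to `G > F` does not increase `N`, and
replacing `σ_1` by the larger part `π_1` does not increase `(k - σ_1)! * σ_1!`, because
`σ_1 + π_1 ≤ k`.
-/

section Flags

open Finset
open scoped Nat

section Arithmetic

theorem factorial_sub_mul_factorial_le {a b k : ℕ} (hab : a ≤ b) (habk : a + b ≤ k) :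
    (k - b)! * b ! ≤ (k - a)! * a ! := by
  obtain ⟨c, rfl⟩ := Nat.exists_eq_add_of_le habk
  rw [show a + b + c - b = a + c by lia, show a + b + c - a = b + c by lia]
  calc (a + c)! * b ! = a ! * b ! * (a + 1).ascFactorial c := by
        rw [← Nat.factorial_mul_ascFactorial, mul_right_comm]
    _ ≤ a ! * b ! * (b + 1).ascFactorial c := by
        gcongr
    _ = (b + c)! * a ! := by
        rw [← Nat.factorial_mul_ascFactorial, mul_assoc, mul_comm]

/-- The composition `(σ_1 + σ_2, σ_3, …)` obtained by merging the first two parts of `σ`.  Removing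
the first member of a flag of type `σ` leaves a flag of this type. -/
def mergeHead {n : ℕ} (σ : Fin (n + 2) → ℕ) : Fin (n + 1) → ℕ :=
  Fin.tail σ + Pi.single 0 (σ 0)

theorem sum_Iic_zero {M : Type*} [AddCommMonoid M] {n : ℕ} (f : Fin (n + 1) → M) :
    ∑ i ∈ Iic 0, f i = f 0 := by
  rw [← bot_eq_zero, Iic_bot, sum_singleton]

variable {n : ℕ} (σ : Fin (n + 2) → ℕ)

theorem mergeHead_zero : mergeHead σ 0 = σ 0 + σ 1 := by
  simp [mergeHead, Fin.tail, add_comm (σ 0)]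

theorem mergeHead_succ (j : Fin n) : mergeHead σ j.succ = σ j.succ.succ := by
  simp [mergeHead, Fin.tail]

theorem sum_Iic_mergeHead (j : Fin (n + 1)) :
    ∑ i ∈ Iic j, mergeHead σ i = ∑ i ∈ Iic j.succ, σ i := by
  have hIic : Iic j.succ = insert 0 ((Iic j).map (Fin.succEmb _)) := by
    ext i
    cases i using Fin.cases <;> simp
  rw [hIic, sum_insert (by simp), sum_map]
  simp [mergeHead, sum_add_distrib, Fin.tail, add_comm (σ 0)]

theorem sum_mergeHead : ∑ i, mergeHead σ i = ∑ i, σ i := by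
  simpa [← Fin.top_eq_last] using sum_Iic_mergeHead σ (Fin.last n)

end Arithmetic

variable {P : Type*} [PartialOrder P] {rk : P → ℕ}

section FlagRecursion

/-- `X` is a flag of type `σ` starting at `F`, that is, one of the chains counted by
`flagDeg rk σ F`. -/
def IsFlagFrom (rk : P → ℕ) {m : ℕ} [NeZero m] (σ : Fin m → ℕ) (F : P) (X : Fin m → P) : Prop :=
  X 0 = F ∧ StrictMono X ∧ ∀ j, rk (X j) = ∑ i ∈ Iic j, σ i

variable {n : ℕ} {σ : Fin (n + 2) → ℕ} {F y : P}

theorem IsFlagFrom.tail {X : Fin (n + 2) → P} (hX : IsFlagFrom rk σ F X) :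
    IsFlagFrom rk (mergeHead σ) (X 1) (Fin.tail X) :=
  ⟨rfl, hX.2.1.comp Fin.strictMono_succ, fun j ↦ by
    rw [sum_Iic_mergeHead, ← hX.2.2 j.succ, Fin.tail]⟩

theorem IsFlagFrom.cons {X : Fin (n + 1) → P} (hX : IsFlagFrom rk (mergeHead σ) y X)
    (hF : rk F = σ 0) (hFy : F < y) : IsFlagFrom rk σ F (Fin.cons F X) := by
  refine ⟨rfl, hX.2.1.vecCons (by rwa [hX.1]), fun j ↦ ?_⟩
  cases j using Fin.cases with
  | zero => rw [Fin.cons_zero, sum_Iic_zero, hF]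
  | succ j => rw [Fin.cons_succ, hX.2.2, sum_Iic_mergeHead]

theorem flagDeg_fin_one {σ : Fin 1 → ℕ} (hF : rk F = σ 0) : flagDeg rk σ F = 1 := by
  have hconst : IsFlagFrom rk σ F fun _ ↦ F :=
    ⟨rfl, Subsingleton.strictMono _, fun j ↦ by rw [Subsingleton.elim j 0, sum_Iic_zero, hF]⟩
  refine Nat.card_eq_one_iff_unique.2 ⟨⟨fun X Y ↦ ?_⟩, ⟨⟨fun _ ↦ F, hconst⟩⟩⟩
  ext j
  rw [Subsingleton.elim j 0, X.2.1, Y.2.1]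

end FlagRecursion

section Graded

theorem strictMono_of_covBy_rk [Finite P]
    (hgraded : ∀ x y : P, x ⋖ y → rk y = rk x + 1) : StrictMono rk := by
  classical
  let _ := Fintype.ofFinite P
  let _ : LocallyFiniteOrder P := Fintype.toLocallyFiniteOrder
  refine (strictMono_iff_forall_covBy rk).2 fun x y hxy ↦ ?_
  rw [hgraded x y hxy]
  exact Nat.lt_succ_self _

theorem isMax_of_rk_eq [Finite P] (hgraded : ∀ x y : P, x ⋖ y → rk y = rk x + 1) {k : ℕ}
    (hpure : ∀ x : P, IsMax x → rk x = k) {x : P} (hx : rk x = k) : IsMax x := by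
  obtain ⟨M, hxM, hM⟩ := Finite.exists_le_maximal (p := fun _ : P ↦ True) (a := x) trivial
  rw [maximal_true] at hM
  obtain rfl | hlt := hxM.eq_or_lt
  · exact hM
  · exact absurd (hx.trans (hpure M hM).symm) (strictMono_of_covBy_rk hgraded hlt).ne

theorem rk_eq_add_card (hgraded : ∀ x y : P, x ⋖ y → rk y = rk x + 1) {α : Type*}
    {F M : P} (e : Set.Icc F M ≃o Finset α) (y : Set.Icc F M) :
    rk y = rk F + #(e y) := by
  classical
  have : Fact (F ≤ M) := ⟨y.2.1.trans y.2.2⟩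
  have hsymm (s : Finset α) : rk (e.symm s : P) = rk F + #s := by
    induction s using Finset.induction_on with
    | empty =>
      have hbot : e.symm ∅ = ⊥ := e.symm.map_bot
      simp [hbot]
    | insert a s ha ih =>
      have hcov : (e.symm s : P) ⋖ e.symm (insert a s) := by
        refine (Set.OrdConnected.apply_covBy_apply_iff (OrderEmbedding.subtype (· ∈ Set.Icc F M))
          ?_).2 ((apply_covBy_apply_iff e.symm).2 (covBy_insert ha))
        simpa only [OrderEmbedding.coe_subtype, Subtype.range_coe_subtype] using!
          Set.ordConnected_Icc
      rw [hgraded _ _ hcov, ih, card_insert_of_notMem ha, add_assoc]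
  simpa using hsymm (e y)

end Graded

variable [Fintype P]

open Classical in
/-- The elements of rank `r` above `x`. -/
noncomputable def upperLevel (rk : P → ℕ) (r : ℕ) (x : P) : Finset P := {y | x ≤ y ∧ rk y = r}

theorem mem_upperLevel {r : ℕ} {x y : P} : y ∈ upperLevel rk r x ↔ x ≤ y ∧ rk y = r := by
  simp [upperLevel]

theorem upperLevel_anti {r : ℕ} {x y : P} (hxy : x ≤ y) : upperLevel rk r y ⊆ upperLevel rk r x :=
  fun _ hz ↦ mem_upperLevel.2 ⟨hxy.trans (mem_upperLevel.1 hz).1, (mem_upperLevel.1 hz).2⟩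

theorem lt_of_mem_upperLevel {r : ℕ} {x y : P} (hy : y ∈ upperLevel rk r x) (hr : rk x < r) :
    x < y := by
  obtain ⟨hxy, rfl⟩ := mem_upperLevel.1 hy
  exact hxy.lt_of_ne fun h ↦ hr.ne (congrArg rk h)

theorem IsFlagFrom.apply_one_mem_upperLevel {n : ℕ} {σ : Fin (n + 2) → ℕ} {F : P}
    {X : Fin (n + 2) → P} (hX : IsFlagFrom rk σ F X) : X 1 ∈ upperLevel rk (σ 0 + σ 1) F := by
  refine mem_upperLevel.2 ⟨hX.1 ▸ hX.2.1.monotone (Fin.zero_le 1), ?_⟩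
  rw [hX.2.2, ← Fin.succ_zero_eq_one, ← sum_Iic_mergeHead, sum_Iic_zero, mergeHead_zero,
    Fin.succ_zero_eq_one]

/-- A flag with at least two members is its first member together with the flag formed by the
others. -/
noncomputable def flagConsEquiv {n : ℕ} {σ : Fin (n + 2) → ℕ} {F : P} (hpos : 0 < σ 1)
    (hF : rk F = σ 0) :
    {X // IsFlagFrom rk σ F X} ≃
      Σ y : upperLevel rk (σ 0 + σ 1) F, {X // IsFlagFrom rk (mergeHead σ) y X} where
  toFun X := ⟨⟨X.1 1, X.2.apply_one_mem_upperLevel⟩, _, X.2.tail⟩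
  invFun Y := ⟨Fin.cons F Y.2.1, Y.2.2.cons hF (lt_of_mem_upperLevel Y.1.2 (by lia))⟩
  left_inv := by
    rintro ⟨X, rfl, hX⟩
    exact Subtype.ext (Fin.cons_self_tail X)
  right_inv := by
    rintro ⟨⟨y, hy⟩, ⟨X, hX⟩⟩
    obtain rfl : X 0 = y := hX.1
    rfl

theorem flagDeg_eq_sum_upperLevel {n : ℕ} {σ : Fin (n + 2) → ℕ} {F : P} (hpos : 0 < σ 1)
    (hF : rk F = σ 0) :
    flagDeg rk σ F = ∑ y ∈ upperLevel rk (σ 0 + σ 1) F, flagDeg rk (mergeHead σ) y := by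
  rw [← sum_coe_sort]
  exact (Nat.card_congr (flagConsEquiv hpos hF)).trans Nat.card_sigma

open Classical in
/-- Every interval `[x, M]` with `F ≤ x` and `rk M = k` has as many elements of each rank as a
Boolean lattice of rank `k - rk x`.  This is the property of Boolean intervals behind the flag
count. -/
def HasBinomialLevels (rk : P → ℕ) (k : ℕ) (F : P) : Prop :=
  ∀ x, F ≤ x → ∀ M ∈ upperLevel rk k x, ∀ r, rk x ≤ r →
    #{y ∈ upperLevel rk r x | y ≤ M} = (k - rk x).choose (r - rk x)

namespace HasBinomialLevels

variable {k : ℕ} {F G : P}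

theorem mono (h : HasBinomialLevels rk k F) (hFG : F ≤ G) : HasBinomialLevels rk k G :=
  fun x hGx ↦ h x (hFG.trans hGx)

theorem upperLevel_rk (h : HasBinomialLevels rk (rk F) F) : upperLevel rk (rk F) F = {F} := by
  refine eq_singleton_iff_unique_mem.2 ⟨mem_upperLevel.2 ⟨le_rfl, rfl⟩, fun M hM ↦ ?_⟩
  have hcard := (h F le_rfl M hM (rk F) le_rfl).le
  rw [Nat.sub_self, Nat.choose_self, card_le_one] at hcard
  exact hcard M (by simp [hM]) F (by simp [mem_upperLevel, (mem_upperLevel.1 hM).1])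

theorem sum_card_upperLevel (h : HasBinomialLevels rk k F) {r : ℕ} (hr : rk F ≤ r) :
    ∑ y ∈ upperLevel rk r F, #(upperLevel rk k y) =
      #(upperLevel rk k F) * (k - rk F).choose (r - rk F) := by
  classical
  have habove : ∀ y ∈ upperLevel rk r F,
      upperLevel rk k y = (upperLevel rk k F).bipartiteAbove (· ≤ ·) y := by
    intro y hy
    have hFy := (mem_upperLevel.1 hy).1
    ext M
    simp only [mem_bipartiteAbove, mem_upperLevel]
    exact ⟨fun hM ↦ ⟨⟨hFy.trans hM.1, hM.2⟩, hM.1⟩, fun hM ↦ ⟨hM.2, hM.1.2⟩⟩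
  calc ∑ y ∈ upperLevel rk r F, #(upperLevel rk k y)
      = ∑ M ∈ upperLevel rk k F, #((upperLevel rk r F).bipartiteBelow (· ≤ ·) M) := by
        rw [← sum_card_bipartiteAbove_eq_sum_card_bipartiteBelow]
        exact sum_congr rfl fun y hy ↦ congrArg card (habove y hy)
    _ = #(upperLevel rk k F) * (k - rk F).choose (r - rk F) :=
        sum_const_nat fun M hM ↦ h F le_rfl M hM r hr

theorem flagDeg_mul_prod_factorial_succ {n : ℕ} {σ : Fin (n + 1) → ℕ}
    (h : HasBinomialLevels rk k F) (hpos : ∀ j : Fin n, 0 < σ j.succ) (hsum : ∑ i, σ i = k)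
    (hF : rk F = σ 0) :
    flagDeg rk σ F * ∏ j : Fin n, (σ j.succ)! = #(upperLevel rk k F) * (k - σ 0)! := by
  induction n generalizing F with
  | zero =>
    obtain rfl : rk F = k := by simpa [hF] using hsum
    simp [flagDeg_fin_one hF, h.upperLevel_rk, ← hF]
  | succ n ih =>
    have hle : σ 0 + σ 1 ≤ k := by
      rw [← hsum, Fin.sum_univ_succ, Fin.sum_univ_succ, Fin.succ_zero_eq_one]
      lia
    have hrec : ∀ y ∈ upperLevel rk (σ 0 + σ 1) F,
        flagDeg rk (mergeHead σ) y * ∏ j : Fin n, (σ j.succ.succ)! =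
          #(upperLevel rk k y) * (k - (σ 0 + σ 1))! := by
      intro y hy
      obtain ⟨hFy, hrk⟩ := mem_upperLevel.1 hy
      simpa only [mergeHead_succ, mergeHead_zero] using
        ih (σ := mergeHead σ) (h.mono hFy) (fun j ↦ mergeHead_succ σ j ▸ hpos j.succ)
          ((sum_mergeHead σ).trans hsum) (hrk.trans (mergeHead_zero σ).symm)
    calc flagDeg rk σ F * ∏ j : Fin (n + 1), (σ j.succ)!
        = (σ 1)! * ∑ y ∈ upperLevel rk (σ 0 + σ 1) F,
            flagDeg rk (mergeHead σ) y * ∏ j : Fin n, (σ j.succ.succ)! := by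
          rw [flagDeg_eq_sum_upperLevel (hpos 0) hF, Fin.prod_univ_succ, ← sum_mul,
            mul_left_comm, Fin.succ_zero_eq_one]
      _ = (σ 1)! * (#(upperLevel rk k F) * (k - σ 0).choose (σ 1) * (k - (σ 0 + σ 1))!) := by
          rw [sum_congr rfl hrec, ← sum_mul, h.sum_card_upperLevel (by lia), hF,
            Nat.add_sub_cancel_left]
      _ = #(upperLevel rk k F) * (k - σ 0)! := by
          rw [← Nat.choose_mul_factorial_mul_factorial (show σ 1 ≤ k - σ 0 by lia), Nat.sub_sub]
          ring

theorem flagDeg_mul_prod_factorial {m : ℕ} [NeZero m] {σ : Fin m → ℕ}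
    (h : HasBinomialLevels rk k F) (hpos : ∀ i, 0 < σ i) (hsum : ∑ i, σ i = k)
    (hF : rk F = σ 0) :
    flagDeg rk σ F * ∏ i, (σ i)! = #(upperLevel rk k F) * ((k - σ 0)! * (σ 0)!) := by
  obtain ⟨n, rfl⟩ := Nat.exists_eq_succ_of_ne_zero (NeZero.ne m)
  rw [Fin.prod_univ_succ, mul_left_comm,
    h.flagDeg_mul_prod_factorial_succ (fun j ↦ hpos j.succ) hsum hF]
  ring

end HasBinomialLevels

section Boolean

open Classical in
theorem card_filter_upperLevel_le (hgraded : ∀ x y : P, x ⋖ y → rk y = rk x + 1)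
    {α : Type*} [Finite α] {F M x : P} (e : Set.Icc F M ≃o Finset α) (hFx : F ≤ x) (hxM : x ≤ M)
    {r : ℕ} (hr : rk x ≤ r) :
    #{y ∈ upperLevel rk r x | y ≤ M} = (rk M - rk x).choose (r - rk x) := by
  cases nonempty_fintype α
  have hrk := rk_eq_add_card hgraded e
  have : Fact (F ≤ M) := ⟨hFx.trans hxM⟩
  have hM : rk M = rk F + Fintype.card α := by
    have htop : e ⊤ = univ := e.map_top
    simpa [htop] using hrk ⊤
  set s := e ⟨x, hFx, hxM⟩
  have hx : rk x = rk F + #s := hrk ⟨x, hFx, hxM⟩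
  have hle_symm (t : Finset α) : x ≤ e.symm t ↔ s ⊆ t := e.le_symm_apply (x := ⟨x, hFx, hxM⟩)
  have hrk_symm (t : Finset α) : rk (e.symm t : P) = rk F + #t := by simpa using hrk (e.symm t)
  calc #{y ∈ upperLevel rk r x | y ≤ M}
      = #{t ∈ powersetCard (r - rk F) univ | s ⊆ t} := by
        symm
        refine card_nbij (fun t ↦ (e.symm t : P)) (fun t ht ↦ ?_)
          (fun t _ u _ htu ↦ e.symm.injective (Subtype.ext htu)) (fun y hy ↦ ?_)
        · obtain ⟨ht, hst⟩ := mem_filter.1 ht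
          have hcard := (mem_powersetCard.1 ht).2
          have hrk_t := hrk_symm t
          exact mem_filter.2 ⟨mem_upperLevel.2 ⟨(hle_symm t).2 hst, by lia⟩, (e.symm t).2.2⟩
        · obtain ⟨hy, hyM⟩ := mem_filter.1 hy
          obtain ⟨hxy, rfl⟩ := mem_upperLevel.1 hy
          set z : Set.Icc F M := ⟨y, hFx.trans hxy, hyM⟩
          refine ⟨e z, mem_filter.2 ⟨mem_powersetCard.2 ⟨subset_univ _, ?_⟩, ?_⟩, by simp [z]⟩
          · rw [hrk z, Nat.add_sub_cancel_left]
          · rw [← hle_symm, e.symm_apply_apply]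
            exact hxy
    _ = (rk M - rk x).choose (r - rk x) := by
        rw [card_filter_powersetCard_subset s univ _ (subset_univ s) (by lia), card_univ]
        congr 1 <;> lia

theorem hasBinomialLevels_of_orderIso_finset
    (hgraded : ∀ x y : P, x ⋖ y → rk y = rk x + 1) {k : ℕ} {F : P}
    (hbool : ∀ M ∈ upperLevel rk k F, ∃ n : ℕ, Nonempty (Set.Icc F M ≃o Finset (Fin n))) :
    HasBinomialLevels rk k F := by
  intro x hFx M hM r hr
  obtain ⟨n, ⟨e⟩⟩ := hbool M (upperLevel_anti hFx hM)
  obtain ⟨hxM, rfl⟩ := mem_upperLevel.1 hM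
  exact card_filter_upperLevel_le hgraded e hFx hxM hr

end Boolean

theorem flagDeg_le_of_lt_simple_general {C : Type*} [Fintype C] [PartialOrder C] (rk : C → ℕ)
    (k : ℕ) {m : ℕ} [NeZero m] (σ π : Fin m → ℕ) (hpos : ∀ i, 0 < σ i) (hsum : ∑ i, σ i = k)
    (e : Equiv.Perm (Fin m)) (hπ : π = σ ∘ e) (h1 : σ 0 < π 0) (F G : C)
    (hlevels : HasBinomialLevels rk k F) (hF : rk F = σ 0) (hG : rk G = π 0) (hFG : F ≤ G) :
    flagDeg rk π G ≤ flagDeg rk σ F := by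
  have hposπ : ∀ i, 0 < π i := fun i ↦ hπ ▸ hpos (e i)
  have hsumπ : ∑ i, π i = k := by rw [hπ, ← hsum]; exact Equiv.sum_comp e σ
  have hprod : ∏ i, (π i)! = ∏ i, (σ i)! := by rw [hπ]; exact Equiv.prod_comp e fun i ↦ (σ i)!
  have hparts : σ 0 + π 0 ≤ k := by
    have he : (0 : Fin m) ≠ e 0 := fun h ↦ h1.ne (by rw [hπ, Function.comp_apply, ← h])
    rw [hπ, ← hsum]
    exact add_le_sum (fun i _ ↦ (hpos i).le) (mem_univ 0) (mem_univ (e 0)) he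
  have hprod_pos : 0 < ∏ i, (σ i)! := prod_pos fun i _ ↦ Nat.factorial_pos (σ i)
  refine Nat.le_of_mul_le_mul_right ?_ hprod_pos
  calc flagDeg rk π G * ∏ i, (σ i)!
      = #(upperLevel rk k G) * ((k - π 0)! * (π 0)!) := by
        rw [← hprod, (hlevels.mono hFG).flagDeg_mul_prod_factorial hposπ hsumπ hG]
    _ ≤ #(upperLevel rk k F) * ((k - σ 0)! * (σ 0)!) :=
        Nat.mul_le_mul (card_le_card (upperLevel_anti hFG))
          (factorial_sub_mul_factorial_le h1.le hparts)
    _ = flagDeg rk σ F * ∏ i, (σ i)! :=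
        (hlevels.flagDeg_mul_prod_factorial hpos hsum hF).symm

end Flags

/-- Let `C` be a finite graded poset with minimum `⊥` (`rk ⊥ = 0` and `rk` increases
by one along covering relations), pure of rank `k`, such that for every `x > ⊥` and
every maximal element `m ≥ x` the interval `[x, m]` is isomorphic to a Boolean
lattice.  Let `σ` be a composition of `k` and `π` a rearrangement of `σ` with
`σ_1 < π_1`.  If `F` has rank `σ_1`, `G` has rank `π_1` and `F < G`, then
`d^σ(F) ≥ d^π(G)`. -/
theorem flagDeg_le_of_lt_simple
    {C : Type*} [Fintype C] [PartialOrder C] [OrderBot C]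
    (rk : C → ℕ)
    (hrk0 : rk (⊥ : C) = 0)
    (hgraded : ∀ x y : C, x ⋖ y → rk y = rk x + 1)
    (k : ℕ) (hpure : ∀ x : C, IsMax x → rk x = k)
    (hbool : ∀ x mx : C, ⊥ < x → IsMax mx → x ≤ mx →
      ∃ n : ℕ, Nonempty (Set.Icc x mx ≃o Finset (Fin n)))
    {m : ℕ} [NeZero m] (σ π : Fin m → ℕ)
    (hpos : ∀ i, 0 < σ i) (hsum : ∑ i, σ i = k)
    (e : Equiv.Perm (Fin m)) (hπ : π = σ ∘ e)
    (h1 : σ 0 < π 0)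
    (F G : C) (hF : rk F = σ 0) (hG : rk G = π 0) (hFG : F < G) :
    flagDeg rk π G ≤ flagDeg rk σ F := by
  have hbotF : ⊥ < F := bot_lt_iff_ne_bot.2 <| by
    rintro rfl
    exact (hpos 0).ne (hrk0.symm.trans hF)
  have hlevels : HasBinomialLevels rk k F :=
    hasBinomialLevels_of_orderIso_finset hgraded fun M hM ↦
      hbool F M hbotF (isMax_of_rk_eq hgraded hpure (mem_upperLevel.1 hM).2) (mem_upperLevel.1 hM).1
  exact flagDeg_le_of_lt_simple_general rk k σ π hpos hsum e hπ h1 F G hlevels hF hG hFG.le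
end
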